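/- Let 1 ≤ k ≤ d and let D_1, …, D_k ⊆ ℤ^d be tiles, each containing 0, which are independent, i.e., for every choice of nonzero vectors v_i ∈ D_i (i = 1,…,k) the vectors v_1, …, v_k are linearly independent over ℚ. If c : ℤ^d → {0,1} is a common co-tiler of D_1, …, D_k, then c = c_1 + … + c_m for finitely many k-periodic functions c_1, …, c_m : ℤ^d → ℤ. -/

import Mathlib

namespace PaperFormal

/-- View an integer vector inside `ℝ^d`. -/
def intVecR {d : ℕ} (u : Fin d → ℤ) : Fin d → ℝ := fun i => (u i : ℝ)

/-- View an integer vector inside `ℚ^d`. -/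
def intVecQ {d : ℕ} (u : Fin d → ℤ) : Fin d → ℚ := fun i => (u i : ℚ)

/-- A (Laurent) polynomial: a finitely supported integer-valued function on `ℤ^d`. -/
def IsPoly {d : ℕ} (f : (Fin d → ℤ) → ℤ) : Prop := (Function.support f).Finite

/-- The product `(fc)(u) = ∑_v f(v) · c(u − v)` of a polynomial `f` with `c : ℤ^d → ℤ`. -/
noncomputable def polyApply {d : ℕ} (f : (Fin d → ℤ) → ℤ) (c : (Fin d → ℤ) → ℤ) :
    (Fin d → ℤ) → ℤ := fun u => ∑ᶠ v, f v * c (u - v)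

/-- The product `(fc)(u) = ∑_v f(v) · c(u − v)` of a polynomial `f` with `c : ℤ^d → ℂ`. -/
noncomputable def polyApplyC {d : ℕ} (f : (Fin d → ℤ) → ℤ) (c : (Fin d → ℤ) → ℂ) :
    (Fin d → ℤ) → ℂ := fun u => ∑ᶠ v, (f v : ℂ) * c (u - v)

/-- `c` is `v`-periodic: `c(u + v) = c(u)` for all `u`. -/
def Periodic {d : ℕ} (c : (Fin d → ℤ) → ℤ) (v : Fin d → ℤ) : Prop := ∀ u, c (u + v) = c u

/-- `c : ℤ^d → ℂ` is `v`-periodic. -/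
def PeriodicC {d : ℕ} (c : (Fin d → ℤ) → ℂ) (v : Fin d → ℤ) : Prop := ∀ u, c (u + v) = c u

/-- `c` is `k`-periodic: it has `k` periods that are linearly independent over `ℚ`. -/
def KPeriodic {d : ℕ} (k : ℕ) (c : (Fin d → ℤ) → ℤ) : Prop :=
  ∃ v : Fin k → (Fin d → ℤ),
    (LinearIndependent ℚ fun i => intVecQ (v i)) ∧ ∀ i, Periodic c (v i)

/-- `c` is strongly periodic: it is `d`-periodic. -/
def StronglyPeriodic {d : ℕ} (c : (Fin d → ℤ) → ℤ) : Prop := KPeriodic d c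

/-- `c : ℤ^d → ℂ` is strongly periodic. -/
def StronglyPeriodicC {d : ℕ} (c : (Fin d → ℤ) → ℂ) : Prop :=
  ∃ v : Fin d → (Fin d → ℤ),
    (LinearIndependent ℚ fun i => intVecQ (v i)) ∧ ∀ i, PeriodicC c (v i)

/-- Two nonzero integer vectors are non-parallel if they are linearly independent over `ℚ`. -/
def NonParallel {d : ℕ} (v w : Fin d → ℤ) : Prop :=
  LinearIndependent ℚ ![intVecQ v, intVecQ w]

/-- A line polynomial in direction `v`: a polynomial whose support contains at least two points
and is contained in `u + ℚv` for some `u ∈ ℤ^d`. -/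
def IsLinePoly {d : ℕ} (f : (Fin d → ℤ) → ℤ) (v : Fin d → ℤ) : Prop :=
  IsPoly f ∧ v ≠ 0 ∧ 2 ≤ (Function.support f).ncard ∧
    ∃ u : Fin d → ℤ, ∀ w ∈ Function.support f, ∃ q : ℚ, intVecQ w = intVecQ u + q • intVecQ v

/-- The difference polynomial `X^v − 1`: value `1` at `v`, value `−1` at `0`, and `0` elsewhere. -/
def diffPoly {d : ℕ} (v : Fin d → ℤ) : (Fin d → ℤ) → ℤ :=
  fun u => if u = v then 1 else if u = 0 then -1 else 0

/-- `c : ℤ^d → ℂ` is periodic in direction `v`: it is `kv`-periodic for some nonzero integer `k`. -/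
def PeriodicInDirC {d : ℕ} (c : (Fin d → ℤ) → ℂ) (v : Fin d → ℤ) : Prop :=
  ∃ k : ℤ, k ≠ 0 ∧ PeriodicC c (k • v)

/-- `c : ℤ^d → ℂ` is `V`-periodic for a linear subspace `V ⊆ ℝ^d`: it is periodic in
direction `v` for every nonzero integer vector `v` lying in `V`. -/
def VPeriodicC {d : ℕ} (V : Submodule ℝ (Fin d → ℝ)) (c : (Fin d → ℤ) → ℂ) : Prop :=
  ∀ v : Fin d → ℤ, v ≠ 0 → intVecR v ∈ V → PeriodicInDirC c v

/-- The discrete cube `C_m + t`. -/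
def cube {d : ℕ} (m : ℕ) (t : Fin d → ℤ) : Set (Fin d → ℤ) :=
  {u | ∀ i, |u i - t i| ≤ (m : ℤ)}

/-- `c : ℤ^d → ℤ` is sparse: for some positive integer `a`,
`|supp(c) ∩ (C_m + t)| ≤ a·m` for all positive `m` and all `t`. -/
def Sparse {d : ℕ} (c : (Fin d → ℤ) → ℤ) : Prop :=
  ∃ a : ℕ, 0 < a ∧ ∀ m : ℕ, 0 < m → ∀ t : Fin d → ℤ,
    (Function.support c ∩ cube m t).ncard ≤ a * m

/-- A `v`-fiber: a function whose support is contained in `w + ℚv` for some `w ∈ ℤ^d`. -/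
def IsFiber {d : ℕ} (e : (Fin d → ℤ) → ℤ) (v : Fin d → ℤ) : Prop :=
  ∃ w : Fin d → ℤ, ∀ x ∈ Function.support e, ∃ q : ℚ, intVecQ x = intVecQ w + q • intVecQ v

/-- `c` is a sum of finitely many periodic `v`-fibers. -/
def FinSumPeriodicFibers {d : ℕ} (v : Fin d → ℤ) (c : (Fin d → ℤ) → ℤ) : Prop :=
  ∃ (r : ℕ) (e : Fin r → ((Fin d → ℤ) → ℤ)), c = ∑ j, e j ∧
    ∀ j, IsFiber (e j) v ∧ ∃ w : Fin d → ℤ, w ≠ 0 ∧ Periodic (e j) w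

end PaperFormal

/-!
Modulo a prime `p`, raising the mask polynomial of a tile to the `p`-th power dilates the tile, so
`c` also tiles with every dilate `(1 + nq) D i` for a suitable `q`. Averaging over `n` against a
Banach limit replaces a translate by `(1 + nq) v` with a `q v`-periodic function; doing so for one
tile after another writes `c` as a real, and after a `ℚ`-linear projection `ℝ → ℚ` as a rational,
combination of `k`-periodic functions.

Modulo `1` the rational summands form a relation between periodic `ℚ/ℤ`-valued functions, that is,
a character of a finitely generated module over the Noetherian ring `ℤ[G]`. Divisibility of `ℚ/ℤ`
splits this character along a primary decomposition. In the primary case the functions are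
annihilated by a power of the augmentation ideal of the subgroup generated by their periods, and
the relation lives on a finitely generated abelian group, where it lifts to a relation between
rational functions once the periods are replaced by multiples. Subtracting the lifts makes the
summands integer-valued.
-/

namespace PaperFormal

open Finset Filter Topology

section LinearExtension

open scoped AddMonoidAlgebra

variable {k G T : Type*} [CommSemiring k] [AddCommMonoid T] [Module k T]

/-- The `k`-linear functional on the group algebra `k[G]` with prescribed values `g` on the basis
`G`. Up to the reflection `u ↦ -u`, its value at a Laurent polynomial `z` is the constant
coefficient of the product `z g`. -/
noncomputable def linearExtension (g : G → T) : k[G] →ₗ[k] T :=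
  Finsupp.linearCombination k g ∘ₗ (AddMonoidAlgebra.coeffLinearEquiv k).toLinearMap

@[simp]
theorem linearExtension_single (g : G → T) (x : G) (a : k) :
    linearExtension g (AddMonoidAlgebra.single x a) = a • g x := by
  simp [linearExtension]

theorem linearExtension_map_single {G T : Type*} [AddCommGroup T] (F : ℤ[G] →+ T) (z : ℤ[G]) :
    linearExtension (k := ℤ) (fun x => F (.single x 1)) z = F z := by
  refine LinearMap.congr_fun (?_ : _ = F.toIntLinearMap) z
  ext x
  simp

end LinearExtension

section Dilation

variable {G κ : Type*} [AddCommGroup G]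

theorem linearExtension_single_mul_sum_single_pow_succ {k T : Type*} [CommRing k] [AddCommGroup T]
    [Module k T] {c : G → T} {A : Finset κ} {θ : κ → G} {s : T}
    (hc : ∀ x, ∑ i ∈ A, c (x + θ i) = s) (m : ℕ) (x : G) :
    linearExtension c (AddMonoidAlgebra.single x (1 : k) *
      (∑ i ∈ A, AddMonoidAlgebra.single (θ i) 1) ^ (m + 1)) = #A ^ m • s := by
  induction m generalizing x with
  | zero => simp [mul_sum, AddMonoidAlgebra.single_mul_single, hc]
  | succ m ih =>
    rw [pow_succ' _ (m + 1), ← mul_assoc, mul_sum, sum_mul, map_sum]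
    simp only [AddMonoidAlgebra.single_mul_single, mul_one, ih, sum_const]
    rw [pow_succ', mul_smul]

theorem sum_add_prime_nsmul_zmod {p : ℕ} [Fact p.Prime] {c : G → ZMod p} {A : Finset κ}
    {θ : κ → G} {s : ZMod p} (hA : ¬ p ∣ #A) (hc : ∀ x, ∑ i ∈ A, c (x + θ i) = s) (x : G) :
    ∑ i ∈ A, c (x + p • θ i) = s := by
  have : CharP (AddMonoidAlgebra (ZMod p) G) p :=
    charP_of_injective_algebraMap (algebraMap (ZMod p) _).injective p
  have frobenius : (∑ i ∈ A, AddMonoidAlgebra.single (θ i) (1 : ZMod p)) ^ p =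
      ∑ i ∈ A, AddMonoidAlgebra.single (p • θ i) 1 := by
    rw [sum_pow_char]
    simp only [AddMonoidAlgebra.single_pow, one_pow]
  have fermat : (#A : ZMod p) ^ (p - 1) = 1 :=
    ZMod.pow_card_sub_one_eq_one (mt (ZMod.natCast_eq_zero_iff _ _).1 hA)
  have h := linearExtension_single_mul_sum_single_pow_succ (k := ZMod p) hc (p - 1) x
  rw [Nat.sub_add_cancel (Fact.out : p.Prime).one_le, frobenius] at h
  simpa [mul_sum, AddMonoidAlgebra.single_mul_single, fermat] using h

theorem abs_sum_le_card_mul {c : κ → ℤ} {B : ℕ} (hB : ∀ i, |c i| ≤ B) (A : Finset κ) :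
    |∑ i ∈ A, c i| ≤ #A * B :=
  (abs_sum_le_sum_abs _ _).trans <| by simpa using sum_le_card_nsmul A _ _ fun i _ => hB i

theorem sum_add_prime_nsmul {c : G → ℤ} {B : ℕ} (hB : ∀ u, |c u| ≤ B) {A : Finset κ} {θ : κ → G}
    {s : ℤ} {p : ℕ} (hp : p.Prime) (hAp : #A * (2 * B + 1) < p)
    (hc : ∀ x, ∑ i ∈ A, c (x + θ i) = s) (x : G) :
    ∑ i ∈ A, c (x + p • θ i) = s := by
  rcases A.eq_empty_or_nonempty with rfl | hA
  · simpa using hc 0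
  have : Fact p.Prime := ⟨hp⟩
  have card_lt : #A < p := by nlinarith
  have modEq : ((∑ i ∈ A, c (x + p • θ i) : ℤ) : ZMod p) = s := by
    push_cast
    refine sum_add_prime_nsmul_zmod (c := fun u => (c u : ZMod p))
      (Nat.not_dvd_of_pos_of_lt hA.card_pos card_lt) (fun y => ?_) x
    exact_mod_cast congrArg (Int.cast : ℤ → ZMod p) (hc y)
  refine sub_eq_zero.1 (Int.eq_zero_of_abs_lt_dvd (m := p) ?_ ?_)
  · exact (ZMod.intCast_eq_intCast_iff_dvd_sub _ _ _).1 modEq.symm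
  · calc |∑ i ∈ A, c (x + p • θ i) - s|
        ≤ #A * B + #A * B := (abs_sub _ _).trans <| add_le_add
          (abs_sum_le_card_mul (fun _ => hB _) A)
          (hc x ▸ abs_sum_le_card_mul (fun _ => hB _) A)
      _ < p := by zify at hAp; nlinarith

theorem sum_add_nsmul_of_prime_factors {c : G → ℤ} {B : ℕ} (hB : ∀ u, |c u| ≤ B)
    {A : Finset G} {s : ℤ} (hc : ∀ x, ∑ u ∈ A, c (x + u) = s) {r : ℕ} (hr : r ≠ 0)
    (hA : ∀ p, p.Prime → p ∣ r → #A * (2 * B + 1) < p) (x : G) :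
    ∑ u ∈ A, c (x + r • u) = s := by
  induction r using induction_on_primes generalizing x with
  | zero => exact absurd rfl hr
  | one => simpa using hc x
  | prime_mul p a hp ih =>
    have dilated_by_a := ih (right_ne_zero_of_mul hr) fun q hq hqa => hA q hq (hqa.mul_left p)
    simpa only [mul_smul] using
      sum_add_prime_nsmul hB hp (hA p hp (dvd_mul_right _ _)) dilated_by_a x

theorem sum_add_one_add_mul_factorial_nsmul {c : G → ℤ} {B : ℕ} (hB : ∀ u, |c u| ≤ B)
    {A : Finset G} {s : ℤ} (hc : ∀ x, ∑ u ∈ A, c (x + u) = s) {M : ℕ}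
    (hM : #A * (2 * B + 1) ≤ M) (n : ℕ) (x : G) :
    ∑ u ∈ A, c (x + (1 + n * M.factorial) • u) = s := by
  refine sum_add_nsmul_of_prime_factors hB hc (by omega) (fun p hp hpr => ?_) x
  by_contra! hle
  have : p ∣ n * M.factorial := (hp.dvd_factorial.2 (hle.trans hM)).mul_left n
  exact hp.one_lt.ne' (Nat.dvd_one.1 ((Nat.dvd_add_left this).1 hpr))

end Dilation

section BanachLimit

theorem exists_linearMap_eq_of_tendsto {α : Type*} (l : Filter α) [l.NeBot] :
    ∃ L : (α → ℝ) →ₗ[ℝ] ℝ, ∀ a y, Tendsto a l (𝓝 y) → L a = y := by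
  let W : Submodule ℝ (α → ℝ) :=
    { carrier := {a | ∃ y, Tendsto a l (𝓝 y)}
      zero_mem' := ⟨0, tendsto_const_nhds⟩
      add_mem' := fun ⟨y, hy⟩ ⟨z, hz⟩ => ⟨y + z, hy.add hz⟩
      smul_mem' := fun r _ ⟨y, hy⟩ => ⟨r • y, hy.const_smul r⟩ }
  have lim_spec (a : W) : Tendsto (a : α → ℝ) l (𝓝 (limUnder l (a : α → ℝ))) :=
    tendsto_nhds_limUnder a.2
  let lim : W →ₗ[ℝ] ℝ :=
    { toFun := fun a => limUnder l (a : α → ℝ)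
      map_add' := fun a b => tendsto_nhds_unique (lim_spec (a + b)) ((lim_spec a).add (lim_spec b))
      map_smul' := fun r a => tendsto_nhds_unique (lim_spec (r • a)) ((lim_spec a).const_smul r) }
  obtain ⟨L, hL⟩ := lim.exists_extend
  refine ⟨L, fun a y hy => ?_⟩
  have : L a = limUnder l a := LinearMap.congr_fun hL ⟨a, y, hy⟩
  rw [this, hy.limUnder_eq]

/-- A Banach limit: a shift-invariant mean on bounded sequences. It is a linear functional on all
sequences, so that it can be exchanged with finite sums unconditionally, but its values on
unbounded sequences carry no meaning. -/
structure IsBanachLimit (L : (ℕ → ℝ) →ₗ[ℝ] ℝ) : Prop where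
  const (r : ℝ) : L (fun _ => r) = r
  abs_le {a : ℕ → ℝ} {B : ℝ} (ha : ∀ n, |a n| ≤ B) : |L a| ≤ B
  shift {a : ℕ → ℝ} {B : ℝ} (ha : ∀ n, |a n| ≤ B) : L (fun n => a (n + 1)) = L a

theorem exists_tendsto_of_forall_abs_le {α : Type*} (l : Ultrafilter α) {a : α → ℝ} {B : ℝ}
    (ha : ∀ n, |a n| ≤ B) : ∃ y, |y| ≤ B ∧ Tendsto a l (𝓝 y) := by
  have h : ↑(l.map a) ≤ 𝓟 (Set.Icc (-B) B) :=
    le_principal_iff.2 <| Ultrafilter.mem_map.2 <| univ_mem' fun n => abs_le.1 (ha n)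
  obtain ⟨y, hy, hlim⟩ := isCompact_Icc.ultrafilter_le_nhds _ h
  exact ⟨y, abs_le.2 hy, hlim⟩

theorem abs_birkhoffAverage_le {α : Type*} (f : α → α) {g : α → ℝ} {B : ℝ} (hg : ∀ x, |g x| ≤ B)
    (n : ℕ) (x : α) : |birkhoffAverage ℝ f g n x| ≤ B := by
  have hB : 0 ≤ B := (abs_nonneg _).trans (hg x)
  have hsum : |birkhoffSum f g n x| ≤ n * B :=
    (abs_sum_le_sum_abs _ _).trans <| by simpa using sum_le_card_nsmul (range n) _ _ fun i _ => hg _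
  rw [birkhoffAverage, smul_eq_mul, abs_mul, abs_inv, Nat.abs_cast]
  exact inv_mul_le_of_le_mul₀ n.cast_nonneg hB hsum

theorem exists_isBanachLimit : ∃ L, IsBanachLimit L := by
  obtain ⟨lim, lim_eq⟩ := exists_linearMap_eq_of_tendsto (hyperfilter ℕ : Filter ℕ)
  have le_atTop : (hyperfilter ℕ : Filter ℕ) ≤ atTop :=
    Nat.cofinite_eq_atTop ▸ hyperfilter_le_cofinite
  let average : (ℕ → ℝ) →ₗ[ℝ] ℕ → ℝ :=
    { toFun := fun a n => birkhoffAverage ℝ Nat.succ a n 0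
      map_add' := fun a b => by ext n; exact congrFun₂ (birkhoffAverage_add ℝ) n 0
      map_smul' := fun r a => by
        ext n
        simp [birkhoffAverage, birkhoffSum, ← mul_sum, mul_left_comm] }
  refine ⟨lim ∘ₗ average, fun r => lim_eq _ _ ?_, fun {a B} ha => ?_, fun {a B} ha => ?_⟩
  · refine (tendsto_const_nhds.congr' ?_).mono_left le_atTop
    filter_upwards [eventually_ne_atTop 0] with n hn
    exact (congrFun (birkhoffAverage_of_comp_eq (R := ℝ) (f := Nat.succ) (g := fun _ => r) rfl
      (Nat.cast_ne_zero.2 hn)) 0).symm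
  · obtain ⟨y, hyB, hy⟩ := exists_tendsto_of_forall_abs_le (hyperfilter ℕ)
      fun n => abs_birkhoffAverage_le Nat.succ ha n 0
    exact (lim_eq (average a) _ hy).symm ▸ hyB
  · have isBounded_range : Bornology.IsBounded (Set.range a) :=
      isBounded_iff_forall_norm_le.2 ⟨B, Set.forall_mem_range.2 ha⟩
    refine sub_eq_zero.1 ?_
    rw [← map_sub]
    refine lim_eq _ _ (Tendsto.mono_left ?_ le_atTop)
    convert tendsto_birkhoffAverage_apply_sub_birkhoffAverage' ℝ isBounded_range Nat.succ 0 with n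
    simp [average, birkhoffAverage, birkhoffSum, Nat.succ_iterate, mul_sub, add_comm]

end BanachLimit

section Averaging

variable {G ι : Type*} [AddCommGroup G] {L : (ℕ → ℝ) →ₗ[ℝ] ℝ} {D : ι → Finset G} {q : ℕ}
  {s : ι → ℝ} {f : G → ℝ}

/-- The bounded real-valued functions whose sums over all translates of each of the dilates
`(1 + nq) D i` equal `s i`: the class of functions that remains closed under `dilateMean`. -/
structure HasDilatedSums (D : ι → Finset G) (q : ℕ) (s : ι → ℝ) (f : G → ℝ) : Prop where
  bounded : ∃ B, ∀ x, |f x| ≤ B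
  sum_eq (i : ι) (n : ℕ) (x : G) : ∑ u ∈ D i, f (x + (1 + n * q) • u) = s i

/-- The average, with respect to a Banach limit `L`, of the translates of `f` by the vectors
`(1 + nq) v`, `n ∈ ℕ`. -/
noncomputable def dilateMean (L : (ℕ → ℝ) →ₗ[ℝ] ℝ) (q : ℕ) (v : G) (f : G → ℝ) : G → ℝ :=
  fun x => L fun n => f (x + (1 + n * q) • v)

theorem HasDilatedSums.dilateMean (hL : IsBanachLimit L) (hf : HasDilatedSums D q s f) (v : G) :
    HasDilatedSums D q s (dilateMean L q v f) where
  bounded := let ⟨B, hB⟩ := hf.bounded; ⟨B, fun _ => hL.abs_le fun _ => hB _⟩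
  sum_eq i n x := by
    rw [← hL.const (s i)]
    simp only [PaperFormal.dilateMean, ← map_sum]
    congr 1
    ext m
    rw [Finset.sum_apply, ← hf.sum_eq i n (x + (1 + m * q) • v)]
    simp only [add_right_comm]

theorem periodic_dilateMean_of_periodic {w : G} (hf : Function.Periodic f w) (v : G) :
    Function.Periodic (dilateMean L q v f) w := fun x => by
  simp only [dilateMean, add_right_comm x w, hf _]

theorem periodic_dilateMean (hL : IsBanachLimit L) {B : ℝ} (hf : ∀ x, |f x| ≤ B) (v : G) :
    Function.Periodic (dilateMean L q v f) (q • v) := fun x => by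
  refine (congrArg L (funext fun n => ?_)).trans (hL.shift fun n => hf (x + (1 + n * q) • v))
  have hn : 1 + (n + 1) * q = q + (1 + n * q) := by ring
  rw [hn, add_smul q, add_assoc]

theorem HasDilatedSums.eq_sub_sum_dilateMean [DecidableEq G] (hL : IsBanachLimit L)
    (hf : HasDilatedSums D q s f) {i : ι} (hi : 0 ∈ D i) :
    f = s i • 1 - ∑ v ∈ (D i).erase 0, PaperFormal.dilateMean L q v f := by
  ext x
  have sum_erase (n : ℕ) : ∑ v ∈ (D i).erase 0, f (x + (1 + n * q) • v) = s i - f x := by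
    rw [← hf.sum_eq i n x, ← sum_erase_add _ _ hi]
    simp
  have : ∑ v ∈ (D i).erase 0, PaperFormal.dilateMean L q v f x = s i - f x := by
    rw [← hL.const (s i - f x)]
    simp only [PaperFormal.dilateMean, ← map_sum]
    congr 1
    ext n
    simpa using sum_erase n
  simp [this]

theorem HasDilatedSums.mem_span_periodic [Finite ι] (hf : HasDilatedSums D q s f)
    (hD : ∀ i, 0 ∈ D i) :
    f ∈ Submodule.span ℝ (insert 1 {g : G → ℝ | ∃ v : ι → G,
      (∀ i, v i ∈ D i ∧ v i ≠ 0) ∧ ∀ i, Function.Periodic g (q • v i)}) := by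
  classical
  cases nonempty_fintype ι
  obtain ⟨L, hL⟩ := exists_isBanachLimit
  suffices ∀ (t : Finset ι) (f : G → ℝ), HasDilatedSums D q s f →
      (∃ v : ι → G, ∀ i ∉ t, (v i ∈ D i ∧ v i ≠ 0) ∧ Function.Periodic f (q • v i)) →
      f ∈ Submodule.span ℝ (insert 1 {g : G → ℝ | ∃ v : ι → G,
        (∀ i, v i ∈ D i ∧ v i ≠ 0) ∧ ∀ i, Function.Periodic g (q • v i)}) from
    this univ f hf ⟨0, by simp⟩
  intro t
  induction t using Finset.induction_on with
  | empty =>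
    rintro f - ⟨v, hv⟩
    exact Submodule.subset_span <| Set.mem_insert_of_mem _
      ⟨v, fun i => (hv i (notMem_empty i)).1, fun i => (hv i (notMem_empty i)).2⟩
  | insert j t _ ih =>
    rintro f hf ⟨v, hv⟩
    rw [hf.eq_sub_sum_dilateMean hL (hD j)]
    refine sub_mem (Submodule.smul_mem _ _ <| Submodule.subset_span <| Set.mem_insert _ _)
      (sum_mem fun w hw => ih _ (hf.dilateMean hL w) ⟨Function.update v j w, fun i hi => ?_⟩)
    obtain ⟨B, hB⟩ := hf.bounded
    rcases eq_or_ne i j with rfl | hij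
    · rw [Function.update_self]
      exact ⟨(mem_erase.1 hw).symm, periodic_dilateMean hL hB w⟩
    · rw [Function.update_of_ne hij]
      obtain ⟨hvi, hper⟩ := hv i (mem_insert.not.2 (not_or.2 ⟨hij, hi⟩))
      exact ⟨hvi, periodic_dilateMean_of_periodic hper w⟩

end Averaging

section ShiftIdeal

open scoped AddMonoidAlgebra

variable {G T : Type*} [AddCommGroup G] [AddCommGroup T]

/-- The ideal of the group ring generated by the differences `X^u - 1` with `u ∈ P`; a function on
`G` with periods `P` is one whose linear extension annihilates this ideal. -/
noncomputable def shiftIdeal (P : Set G) : Ideal ℤ[G] :=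
  Ideal.span ((fun u => .single u 1 - 1) '' P)

theorem single_add_sub_single_mem_shiftIdeal {P : Set G} {u : G} (hu : u ∈ P) (x : G) :
    .single (x + u) 1 - .single x 1 ∈ shiftIdeal P := by
  have : (.single (x + u) 1 - .single x 1 : ℤ[G]) = .single x 1 * (.single u 1 - 1) := by
    rw [mul_sub, AddMonoidAlgebra.single_mul_single, mul_one, mul_one]
  rw [this]
  exact Ideal.mul_mem_left _ _ (Ideal.subset_span (Set.mem_image_of_mem _ hu))

theorem shiftIdeal_closure_le (P : Set G) :
    shiftIdeal (AddSubgroup.closure P : Set G) ≤ shiftIdeal P := by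
  rw [shiftIdeal, Ideal.span_le]
  rintro _ ⟨u, hu, rfl⟩
  suffices ∀ x, .single (x + u) 1 - .single x 1 ∈ shiftIdeal P by
    simpa [AddMonoidAlgebra.one_def] using this 0
  induction hu using AddSubgroup.closure_induction with
  | mem u hu => exact single_add_sub_single_mem_shiftIdeal hu
  | zero => simp
  | add u v _ _ ihu ihv =>
    intro x
    rw [← add_assoc, ← sub_add_sub_cancel]
    exact add_mem (ihv (x + u)) (ihu x)
  | neg u _ ih =>
    intro x
    rw [← neg_sub, neg_mem_iff]
    simpa using ih (x + -u)

theorem map_shiftIdeal {A : Type*} [AddCommGroup A] (f : A →+ G) (P : Set A) :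
    (shiftIdeal P).map (AddMonoidAlgebra.mapDomainRingHom ℤ f) = shiftIdeal (f '' P) := by
  have (u : A) : AddMonoidAlgebra.mapDomainRingHom ℤ f (.single u 1 - 1) = .single (f u) 1 - 1 := by
    rw [map_sub, map_one, AddMonoidAlgebra.mapDomainRingHom_apply,
      AddMonoidAlgebra.mapDomain_single]
  simp only [shiftIdeal, Ideal.map_span, Set.image_image, this]

theorem linearExtension_eq_zero_of_periodic {P : Set G} {g : G → T}
    (hg : ∀ u ∈ P, Function.Periodic g u) {z : ℤ[G]} (hz : z ∈ shiftIdeal P) :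
    linearExtension (k := ℤ) g z = 0 := by
  suffices ∀ r : ℤ[G], linearExtension (k := ℤ) g (r * z) = 0 by simpa using this 1
  refine Submodule.span_induction (fun _ => ?_) (fun r => by simp)
    (fun y z _ _ hy hz r => by rw [mul_add, map_add, hy, hz, add_zero])
    (fun a z _ hz r => by rw [smul_eq_mul, ← mul_assoc, hz]) hz
  rintro ⟨u, hu, rfl⟩ r
  induction r using AddMonoidAlgebra.induction_linear with
  | zero => simp
  | add r s hr hs => rw [add_mul, map_add, hr, hs, add_zero]
  | single x m => simp [mul_sub, AddMonoidAlgebra.single_mul_single, hg u hu x]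

theorem linearExtension_comp_add {A : Type*} [AddCommGroup A] (f : A →+ G) (g : G → T) (t : G)
    (z : ℤ[A]) : linearExtension (k := ℤ) (fun y => g (t + f y)) z =
      linearExtension (k := ℤ) g (.single t 1 * AddMonoidAlgebra.mapDomainRingHom ℤ f z) := by
  induction z using AddMonoidAlgebra.induction_linear with
  | zero => simp
  | add z w hz hw => rw [map_add, map_add, mul_add, map_add, hz, hw]
  | single x m => simp [AddMonoidAlgebra.single_mul_single]

theorem linearExtension_comp_add_eq_zero {A : Type*} [AddCommGroup A] {f : A →+ G} {P : Set A}
    {n : ℕ} {g : G → T} (hg : ∀ z ∈ shiftIdeal (f '' P) ^ n, linearExtension (k := ℤ) g z = 0)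
    (t : G) {z : ℤ[A]} (hz : z ∈ shiftIdeal P ^ n) :
    linearExtension (k := ℤ) (fun y => g (t + f y)) z = 0 := by
  rw [linearExtension_comp_add]
  refine hg _ (Ideal.mul_mem_left _ _ ?_)
  rw [← map_shiftIdeal, ← Ideal.map_pow]
  exact Ideal.mem_map_of_mem _ hz

theorem finite_quotient_shiftIdeal_univ_pow [AddMonoid.FG G] (n : ℕ) :
    Module.Finite ℤ (ℤ[G] ⧸ shiftIdeal (Set.univ : Set G) ^ n) := by
  have isIntegral_single (x : G) :
      IsIntegral ℤ (Ideal.Quotient.mk (shiftIdeal (Set.univ : Set G) ^ n) (.single x 1)) := by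
    rw [← sub_add_cancel (AddMonoidAlgebra.single x 1) 1, map_add, map_one]
    refine (IsIntegral.of_pow n.succ_pos ?_).add isIntegral_one
    have : (.single x 1 - 1 : ℤ[G]) ^ (n + 1) ∈ shiftIdeal (Set.univ : Set G) ^ n :=
      Ideal.pow_le_pow_right n.le_succ <| Ideal.pow_mem_pow
        (Ideal.subset_span (Set.mem_image_of_mem _ (Set.mem_univ x))) _
    rw [← map_pow, Ideal.Quotient.eq_zero_iff_mem.2 this]
    exact isIntegral_zero
  have : Algebra.IsIntegral ℤ (ℤ[G] ⧸ shiftIdeal (Set.univ : Set G) ^ n) := by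
    refine ⟨fun z => ?_⟩
    obtain ⟨z, rfl⟩ := Ideal.Quotient.mk_surjective z
    induction z using AddMonoidAlgebra.induction_linear with
    | zero => rw [map_zero]; exact isIntegral_zero
    | add z w hz hw => rw [map_add]; exact hz.add hw
    | single x m =>
      rw [← mul_one m, ← smul_eq_mul, ← AddMonoidAlgebra.smul_single, map_zsmul]
      exact (isIntegral_single x).smul m
  exact Algebra.IsIntegral.finite

end ShiftIdeal

section RatCircle

/-- The group `ℚ/ℤ` in which characters take their values. -/
abbrev RatCircle : Type := AddCircle (1 : ℚ)

/-- The projection `ℚ → ℚ/ℤ`. -/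
noncomputable def ratToCircle : ℚ →+ RatCircle :=
  QuotientAddGroup.mk' (AddSubgroup.zmultiples (1 : ℚ))

theorem ratToCircle_surjective : Function.Surjective ratToCircle :=
  QuotientAddGroup.mk'_surjective _

theorem ratToCircle_eq_zero_iff {x : ℚ} : ratToCircle x = 0 ↔ ∃ m : ℤ, (m : ℚ) = x :=
  (AddCircle.coe_eq_zero_iff (1 : ℚ)).trans (by simp only [zsmul_one])

theorem exists_sum_eq_zero_of_surjective {ι A B : Type*} [Fintype ι] [AddCommGroup A]
    [AddCommGroup B] {p : A →+ B} (hp : Function.Surjective p) {t : ι → B} (ht : ∑ a, t a = 0) :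
    ∃ s : ι → A, ∑ a, s a = 0 ∧ ∀ a, p (s a) = t a := by
  classical
  choose s hs using fun a => hp (t a)
  rcases isEmpty_or_nonempty ι with _ | ⟨⟨a₀⟩⟩
  · exact ⟨s, by simp, hs⟩
  have sum_mem_ker : p (∑ a, s a) = 0 := by simp only [map_sum, hs, ht]
  refine ⟨s - Pi.single a₀ (∑ a, s a), by simp, fun a => ?_⟩
  rcases eq_or_ne a a₀ with rfl | h
  · simp [sum_mem_ker, hs]
  · simp [h, hs]

theorem exists_smul_sub_ratToCircle_eq_zero (M : Type*) [AddCommGroup M] [Module.Finite ℤ M] :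
    ∃ e : ℕ, e ≠ 0 ∧ ∀ F : M →+ RatCircle, ∃ ψ : M →+ ℚ,
      ∀ x, e • (F x - ratToCircle (ψ x)) = 0 := by
  obtain ⟨e, he_annihilator, he⟩ := Submodule.annihilator_top_inter_nonZeroDivisors
    (Submodule.torsion_isTorsion (R := ℤ) (M := M))
  obtain ⟨s, hs⟩ := Module.projective_lifting_property (Submodule.torsion ℤ M).mkQ LinearMap.id
    (Submodule.mkQ_surjective _)
  refine ⟨e.natAbs, Int.natAbs_ne_zero.2 (nonZeroDivisors.ne_zero he), fun F => ?_⟩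
  obtain ⟨ψ, hψ⟩ := Module.projective_lifting_property ratToCircle.toIntLinearMap
    (F.toIntLinearMap ∘ₗ s) ratToCircle_surjective
  let proj := (Submodule.torsion ℤ M).mkQ
  refine ⟨(ψ ∘ₗ proj).toAddMonoidHom, fun x => ?_⟩
  have sub_mem_torsion : x - s (proj x) ∈ Submodule.torsion ℤ M := by
    rw [← Submodule.Quotient.mk_eq_zero, Submodule.Quotient.mk_sub, sub_eq_zero]
    exact (LinearMap.congr_fun hs (proj x)).symm
  have smul_eq_zero : e • (x - s (proj x)) = 0 := congrArg Subtype.val <|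
    Submodule.mem_annihilator.1 he_annihilator ⟨_, sub_mem_torsion⟩ Submodule.mem_top
  have : F x - ratToCircle (ψ (proj x)) = F (x - s (proj x)) := by
    rw [map_sub]
    exact congrArg (F x - ·) (LinearMap.congr_fun hψ (proj x))
  change e.natAbs • (F x - ratToCircle (ψ (proj x))) = 0
  rw [this, natAbs_nsmul_eq_zero, ← map_zsmul, smul_eq_zero, map_zero]

theorem exists_rat_functional_of_finite_quotient {R E : Type*} [CommRing R] [AddCommGroup E]
    [Module R E] (K : Submodule R E) [Module.Finite ℤ (E ⧸ K)] :
    ∃ e : ℕ, e ≠ 0 ∧ ∀ F : E →+ RatCircle, (∀ z ∈ K, F z = 0) →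
      ∃ ψ : E →+ ℚ, (∀ z ∈ K, ψ z = 0) ∧ ∀ z, e • (F z - ratToCircle (ψ z)) = 0 := by
  obtain ⟨e, he, approx⟩ := exists_smul_sub_ratToCircle_eq_zero (E ⧸ K)
  refine ⟨e, he, fun F hF => ?_⟩
  obtain ⟨ψ, hψ⟩ := approx (QuotientAddGroup.lift K.toAddSubgroup F hF)
  refine ⟨ψ.comp K.mkQ.toAddMonoidHom, fun z hz => ?_, fun z => hψ (K.mkQ z)⟩
  have : K.mkQ z = 0 := (Submodule.Quotient.mk_eq_zero _).2 hz
  simp [this]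

theorem exists_eq_sum_of_eq_zero_on_inf {R E : Type*} [CommRing R] [AddCommGroup E] [Module R E]
    (s : Finset (Submodule R E)) {F : E →+ RatCircle} (hF : ∀ z ∈ s.inf id, F z = 0) :
    ∃ Fs : s → E →+ RatCircle, (∀ Q : s, ∀ z ∈ Q.1, Fs Q z = 0) ∧ F = ∑ Q, Fs Q := by
  classical
  let toPi : E →ₗ[R] ∀ Q : s, E ⧸ Q.1 := LinearMap.pi fun Q => Q.1.mkQ
  have ker_toPi : LinearMap.ker toPi = s.inf id := by
    ext z
    simp [toPi, Submodule.mem_finsetInf, funext_iff]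
  let embed : (E ⧸ s.inf id) →ₗ[R] ∀ Q : s, E ⧸ Q.1 := (s.inf id).liftQ toPi ker_toPi.ge
  have embed_injective : Function.Injective embed := by
    rw [← LinearMap.ker_eq_bot, Submodule.ker_liftQ_eq_bot']
    exact ker_toPi.symm
  obtain ⟨W, hW⟩ := CharacterModule.dual_surjective_of_injective embed embed_injective
    (QuotientAddGroup.lift (s.inf id).toAddSubgroup F hF)
  let W' : (∀ Q : s, E ⧸ Q.1) →+ RatCircle := W
  have W_toPi (z : E) : W' (toPi z) = F z := DFunLike.congr_fun hW ((s.inf id).mkQ z)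
  refine ⟨fun Q => (W'.comp (AddMonoidHom.single (fun Q : s => E ⧸ Q.1) Q)).comp
    Q.1.mkQ.toAddMonoidHom, fun Q z hz => ?_, ?_⟩
  · have : Q.1.mkQ z = 0 := (Submodule.Quotient.mk_eq_zero _).2 hz
    simp [this]
  · ext z
    rw [← W_toPi, ← univ_sum_single (toPi z), map_sum, AddMonoidHom.finsetSum_apply]
    rfl

end RatCircle

theorem exists_pow_sub_one_mem_of_isUnit {R : Type*} [CommRing R] (I : Ideal R) [Finite (R ⧸ I)] :
    ∃ N : ℕ, N ≠ 0 ∧ ∀ u, IsUnit u → u ^ N - 1 ∈ I := by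
  refine ⟨Nat.card (R ⧸ I)ˣ, Nat.card_pos.ne', fun u hu => ?_⟩
  obtain ⟨v, hv⟩ := hu.map (Ideal.Quotient.mk I)
  rw [← Ideal.Quotient.eq_zero_iff_mem, map_sub, map_pow, map_one, ← hv,
    ← Units.val_pow_eq_pow_val, pow_card_eq_one', Units.val_one, sub_self]

theorem finite_quotient_sup_span_natCast {R : Type*} [CommRing R] (I : Ideal R)
    [Module.Finite ℤ (R ⧸ I)] {e : ℕ} (he : e ≠ 0) : Finite (R ⧸ I ⊔ Ideal.span {(e : R)}) := by
  have : Module.Finite ℤ (R ⧸ I ⊔ Ideal.span {(e : R)}) :=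
    Module.Finite.of_surjective ((Submodule.factor le_sup_left).restrictScalars ℤ)
      (Submodule.factor_surjective (p := I) (p' := I ⊔ Ideal.span {(e : R)}) le_sup_left)
  refine Module.finite_of_fg_torsion _ fun z => ?_
  refine ⟨⟨e, mem_nonZeroDivisors_of_ne_zero (Int.natCast_ne_zero.2 he)⟩, ?_⟩
  obtain ⟨z, rfl⟩ := Ideal.Quotient.mk_surjective z
  have : (e : R) * z ∈ I ⊔ Ideal.span {(e : R)} :=
    Ideal.mem_sup_right (Ideal.mul_mem_right _ _ (Ideal.mem_span_singleton_self _))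
  simpa [Submonoid.smul_def] using Ideal.Quotient.eq_zero_iff_mem.2 this

theorem single_mem_pi {ι R : Type*} [DecidableEq ι] [CommRing R] {I : ι → Ideal R} {a : ι}
    {z : R} (hz : z ∈ I a) : Pi.single a z ∈ Submodule.pi Set.univ I := fun b _ => by
  rcases eq_or_ne b a with rfl | h
  · simpa using hz
  · simp [h]

section Relations

open scoped AddMonoidAlgebra

variable {ι G T : Type*} [AddCommGroup T]

section FamilyFunctional

variable [Fintype ι]

/-- The additive functional on `ℤ[G]^ι` whose coordinates are the linear extensions of a family
of functions on `G`. -/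
noncomputable def familyFunctional (g : ι → G → T) : (ι → ℤ[G]) →+ T :=
  ∑ a, (linearExtension (k := ℤ) (g a)).toAddMonoidHom.comp (Pi.evalAddMonoidHom _ a)

theorem familyFunctional_apply (g : ι → G → T) (z : ι → ℤ[G]) :
    familyFunctional g z = ∑ a, linearExtension (k := ℤ) (g a) (z a) := by
  simp [familyFunctional, AddMonoidHom.finsetSum_apply]

theorem familyFunctional_single [DecidableEq ι] (g : ι → G → T) (a : ι) (z : ℤ[G]) :
    familyFunctional g (Pi.single a z) = linearExtension (k := ℤ) (g a) z := by
  rw [familyFunctional_apply, Fintype.sum_eq_single a fun b hb => by simp [hb], Pi.single_eq_same]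

end FamilyFunctional

variable [AddCommGroup G] {P : ι → Set G}

/-- The submodule of `ℤ[G]^ι` whose annihilating functionals are precisely the families that form
an `IsPeriodicRelation P`. -/
noncomputable def relations (P : ι → Set G) : Submodule ℤ[G] (ι → ℤ[G]) :=
  Submodule.pi Set.univ (fun a => shiftIdeal (P a)) ⊔ Submodule.span _ {1}

theorem single_mem_relations [DecidableEq ι] {a : ι} {z : ℤ[G]} (hz : z ∈ shiftIdeal (P a)) :
    Pi.single a z ∈ relations P :=
  Submodule.mem_sup_left (single_mem_pi (I := fun a => shiftIdeal (P a)) hz)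

variable [Fintype ι]

/-- A family of functions `g a` with periods `P a` that sums to zero. -/
structure IsPeriodicRelation (P : ι → Set G) (g : ι → G → T) : Prop where
  periodic (a : ι) : ∀ u ∈ P a, Function.Periodic (g a) u
  sum_eq_zero (x : G) : ∑ a, g a x = 0

theorem IsPeriodicRelation.familyFunctional_eq_zero {g : ι → G → T} (hg : IsPeriodicRelation P g)
    {z : ι → ℤ[G]} (hz : z ∈ relations P) : familyFunctional g z = 0 := by
  obtain ⟨y, hy, w, hw, rfl⟩ := Submodule.mem_sup.1 hz
  obtain ⟨r, rfl⟩ := Submodule.mem_span_singleton.1 hw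
  have shift_part : familyFunctional g y = 0 := by
    rw [familyFunctional_apply]
    exact Finset.sum_eq_zero fun a _ =>
      linearExtension_eq_zero_of_periodic (hg.periodic a) (hy a trivial)
  have diagonal_part (r : ℤ[G]) : familyFunctional g (r • 1) = 0 := by
    simp only [familyFunctional_apply, Pi.smul_apply, Pi.one_apply, smul_eq_mul, mul_one]
    induction r using AddMonoidAlgebra.induction_linear with
    | zero => simp
    | add r s hr hs => simp only [map_add, sum_add_distrib, hr, hs, add_zero]
    | single x m => simp only [linearExtension_single, ← smul_sum, hg.sum_eq_zero, smul_zero]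
  rw [map_add, shift_part, diagonal_part, add_zero]

theorem isPeriodicRelation_of_eq_zero_on_relations [DecidableEq ι] {F : (ι → ℤ[G]) →+ T}
    (hF : ∀ z ∈ relations P, F z = 0) :
    IsPeriodicRelation P fun a x => F (Pi.single a (.single x 1)) where
  periodic a u hu x := by
    rw [← sub_eq_zero, ← map_sub, ← Pi.single_sub]
    exact hF _ (single_mem_relations (single_add_sub_single_mem_shiftIdeal hu x))
  sum_eq_zero x := by
    rw [← map_sum, univ_sum_single (fun _ : ι => (.single x 1 : ℤ[G]))]
    refine hF _ (Submodule.mem_sup_right (Submodule.mem_span_singleton.2 ⟨.single x 1, ?_⟩))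
    ext1 a
    simp

/-- The relation `g` among `ℚ/ℤ`-valued functions is the reduction of a relation among
`ℚ`-valued functions whose periods are the `N`-fold multiples of the prescribed ones. -/
def HasRatLift (P : ι → Set G) (N : ℕ) (g : ι → G → RatCircle) : Prop :=
  ∃ φ : ι → G → ℚ, IsPeriodicRelation (fun a => (N • ·) '' P a) φ ∧
    ∀ a x, ratToCircle (φ a x) = g a x

theorem IsPeriodicRelation.hasRatLift {φ : ι → G → ℚ} (hφ : IsPeriodicRelation P φ) :
    HasRatLift P 1 fun a x => ratToCircle (φ a x) :=
  ⟨φ, by simpa only [one_smul, Set.image_id'] using hφ, fun _ _ => rfl⟩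

theorem hasRatLift_of_forall_periodic {N : ℕ} {g : ι → G → RatCircle}
    (hg : ∀ a b, ∀ u ∈ P b, Function.Periodic (g a) (N • u)) (hg0 : ∀ x, ∑ a, g a x = 0) :
    HasRatLift P N g := by
  choose lift lift_sum lift_eq using fun t : {t : ι → RatCircle // ∑ a, t a = 0} =>
    exists_sum_eq_zero_of_surjective ratToCircle_surjective t.2
  refine ⟨fun a x => lift ⟨fun b => g b x, hg0 x⟩ a,
    ⟨fun b => Set.forall_mem_image.2 fun u hu x => ?_, fun x => lift_sum _⟩, fun a x => lift_eq _ a⟩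
  have (a : ι) : g a (x + N • u) = g a x := hg a b u hu x
  simp only [this]

theorem HasRatLift.zero : HasRatLift P 1 0 :=
  ⟨0, ⟨fun _ _ _ _ => rfl, by simp⟩, by simp⟩

theorem HasRatLift.add {N M : ℕ} {g h : ι → G → RatCircle} (hg : HasRatLift P N g)
    (hh : HasRatLift P M h) : HasRatLift P (N * M) (g + h) := by
  obtain ⟨φ, hφ, φ_lift⟩ := hg
  obtain ⟨χ, hχ, χ_lift⟩ := hh
  refine ⟨φ + χ, ⟨fun a => Set.forall_mem_image.2 fun u hu => ?_, fun x => ?_⟩, fun a x => ?_⟩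
  · have hφu : Function.Periodic (φ a) ((N * M) • u) := by
      rw [mul_comm, mul_smul]
      exact (hφ.periodic a _ (Set.mem_image_of_mem _ hu)).nsmul M
    have hχu : Function.Periodic (χ a) ((N * M) • u) := by
      rw [mul_smul]
      exact (hχ.periodic a _ (Set.mem_image_of_mem _ hu)).nsmul N
    exact hφu.add hχu
  · simp [sum_add_distrib, hφ.sum_eq_zero, hχ.sum_eq_zero]
  · simp [φ_lift, χ_lift]

theorem exists_hasRatLift_sum {κ : Type*} (t : Finset κ) {g : κ → ι → G → RatCircle}
    (hg : ∀ j ∈ t, ∃ N, N ≠ 0 ∧ HasRatLift P N (g j)) :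
    ∃ N, N ≠ 0 ∧ HasRatLift P N (∑ j ∈ t, g j) :=
  sum_induction g (fun f => ∃ N, N ≠ 0 ∧ HasRatLift P N f)
    (fun _ _ ⟨N, hN, hg⟩ ⟨M, hM, hh⟩ => ⟨N * M, mul_ne_zero hN hM, hg.add hh⟩)
    ⟨1, one_ne_zero, .zero⟩ hg

theorem HasRatLift.of_subtype (S : ι → Prop) [DecidablePred S] {N : ℕ} {g : ι → G → RatCircle}
    (hg : HasRatLift (fun a : {a // S a} => P a) N fun a => g a)
    (hS : ∀ a, ¬ S a → g a = 0) : HasRatLift P N g := by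
  obtain ⟨φ, hφ, φ_lift⟩ := hg
  refine ⟨fun a x => if h : S a then φ ⟨a, h⟩ x else 0,
    ⟨fun a u hu x => ?_, fun x => ?_⟩, fun a x => ?_⟩
  · split_ifs with h
    · exact hφ.periodic ⟨a, h⟩ u hu x
    · rfl
  · rw [← Fintype.sum_subtype_add_sum_subtype S, add_eq_left.2, ← hφ.sum_eq_zero x]
    · exact sum_congr rfl fun a _ => dif_pos a.2
    · exact sum_eq_zero fun a _ => dif_neg a.2
  · dsimp only
    split_ifs with h
    · exact φ_lift ⟨a, h⟩ x
    · rw [hS a h, map_zero, Pi.zero_apply]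

theorem HasRatLift.of_cosets {H : AddSubgroup G} (hP : ∀ a, P a ⊆ H) {N : ℕ}
    {g : ι → G → RatCircle}
    (hg : ∀ t : G, HasRatLift (fun a => ((↑) : H → G) ⁻¹' P a) N fun a y => g a (t + y)) :
    HasRatLift P N g := by
  choose φ hφ φ_lift using hg
  let rep : G → G := fun x => (x : G ⧸ H).out
  have sub_rep_mem (x : G) : x - rep x ∈ H := by
    rw [sub_eq_neg_add, ← QuotientAddGroup.eq]
    exact Quotient.out_eq _
  have rep_add {u : G} (hu : u ∈ H) (x : G) : rep (x + u) = rep x :=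
    congrArg Quotient.out (QuotientAddGroup.mk_add_of_mem x hu)
  refine ⟨fun a x => φ (rep x) a ⟨x - rep x, sub_rep_mem x⟩,
    ⟨fun a => Set.forall_mem_image.2 fun u hu x => ?_,
      fun x => (hφ (rep x)).sum_eq_zero _⟩, fun a x => ?_⟩
  · have hNu : N • u ∈ H := nsmul_mem (hP a hu) N
    have shifted : (⟨x + N • u - rep (x + N • u), sub_rep_mem _⟩ : H) =
        ⟨x - rep x, sub_rep_mem x⟩ + N • ⟨u, hP a hu⟩ := by
      ext
      simp [rep_add hNu, add_sub_right_comm]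
    dsimp only
    rw [shifted, rep_add hNu]
    exact (hφ (rep x)).periodic a _
      (Set.mem_image_of_mem _ (show (⟨u, hP a hu⟩ : H) ∈ _ from hu)) _
  · simp only [φ_lift, add_sub_cancel]

end Relations

section Lifting

open scoped AddMonoidAlgebra

variable {ι G : Type*} [AddCommGroup G] {P : ι → Set G}

theorem finite_quotient_sup_pi {ι R : Type*} [Finite ι] [CommRing R] (K : Submodule R (ι → R))
    (I : Ideal R) [Module.Finite ℤ (R ⧸ I)] :
    Module.Finite ℤ ((ι → R) ⧸ K ⊔ Submodule.pi Set.univ fun _ => I) := by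
  classical
  cases nonempty_fintype ι
  have : Module.Finite ℤ ((ι → R) ⧸ Submodule.pi Set.univ fun _ : ι => I) :=
    Module.Finite.equiv ((Submodule.quotientPi fun _ : ι => I).restrictScalars ℤ).symm
  exact Module.Finite.of_surjective ((Submodule.factor le_sup_right).restrictScalars ℤ)
    (Submodule.factor_surjective (p := Submodule.pi Set.univ fun _ : ι => I) le_sup_right)

theorem isUnit_single_one (u : G) : IsUnit (.single u 1 : ℤ[G]) :=
  .of_mul_eq_one (.single (-u) 1) <| by
    rw [AddMonoidAlgebra.single_mul_single, add_neg_cancel, mul_one, AddMonoidAlgebra.one_def]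

theorem periodic_of_eq_zero_on_single_ideal {T : Type*} [AddCommGroup T] [DecidableEq ι]
    {F : (ι → ℤ[G]) →+ T} {a : ι} {J : Ideal ℤ[G]} (hF : ∀ z ∈ J, F (Pi.single a z) = 0) {N : ℕ}
    {u : G} (hN : (.single u 1 : ℤ[G]) ^ N - 1 ∈ J) :
    Function.Periodic (fun x => F (Pi.single a (.single x 1))) (N • u) := fun x => by
  have : (.single (x + N • u) 1 - .single x 1 : ℤ[G]) =
      .single x 1 * ((.single u 1) ^ N - 1) := by
    rw [mul_sub, AddMonoidAlgebra.single_pow, AddMonoidAlgebra.single_mul_single, one_pow,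
      mul_one, mul_one]
  rw [← sub_eq_zero, ← map_sub, ← Pi.single_sub, this]
  exact hF _ (Ideal.mul_mem_left _ _ hN)

theorem isNoetherianRing_addMonoidAlgebra [AddGroup.FG G] : IsNoetherianRing ℤ[G] :=
  Algebra.FiniteType.isNoetherianRing ℤ _

theorem single_mem_of_isPrimary [DecidableEq ι] {Q : Submodule ℤ[G] (ι → ℤ[G])}
    (hPQ : relations P ≤ Q) (hQ : Q.IsPrimary) {a : ι}
    (ha : ¬ shiftIdeal (P a) ≤ (Q.colon Set.univ).radical) (z : ℤ[G]) : Pi.single a z ∈ Q := by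
  obtain ⟨r, hr, hrp⟩ := Set.not_subset.1 ha
  refine (hQ.mem_or_mem (r := r) (hPQ ?_)).resolve_right hrp
  rw [← Pi.single_smul]
  exact single_mem_relations (Ideal.mul_mem_right _ _ hr)

theorem linearExtension_map_pi_single {T : Type*} [AddCommGroup T] [DecidableEq ι]
    (F : (ι → ℤ[G]) →+ T) (a : ι) (z : ℤ[G]) :
    linearExtension (k := ℤ) (fun x => F (Pi.single a (.single x 1))) z = F (Pi.single a z) :=
  linearExtension_map_single (F.comp (AddMonoidHom.single (fun _ => ℤ[G]) a)) z

variable [Fintype ι]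

theorem hasRatLift_of_eq_zero_on_single_ideal [DecidableEq ι] {F : (ι → ℤ[G]) →+ RatCircle}
    (hF : ∀ z ∈ relations P, F z = 0) {J : Ideal ℤ[G]} (hJ : ∀ a, ∀ z ∈ J, F (Pi.single a z) = 0)
    {N : ℕ} (hN : ∀ u : G, (.single u 1 : ℤ[G]) ^ N - 1 ∈ J) :
    HasRatLift P N fun a x => F (Pi.single a (.single x 1)) :=
  hasRatLift_of_forall_periodic
    (fun a _ u _ => periodic_of_eq_zero_on_single_ideal (hJ a) (hN u))
    (isPeriodicRelation_of_eq_zero_on_relations hF).sum_eq_zero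

/- Modulo `K`, the functional of `g` is a rational functional `ψ` up to an error of bounded order.
The error is invariant under `N • u` for every `u`, so it may be lifted pointwise. -/
theorem exists_hasRatLift_of_finite_quotient (P : ι → Set G) (I : Ideal ℤ[G])
    [Module.Finite ℤ (ℤ[G] ⧸ I)] :
    ∃ N, N ≠ 0 ∧ ∀ g : ι → G → RatCircle, IsPeriodicRelation P g →
      (∀ a, ∀ z ∈ I, linearExtension (k := ℤ) (g a) z = 0) → HasRatLift P N g := by
  classical
  let K := relations P ⊔ Submodule.pi Set.univ fun _ => I
  have : Module.Finite ℤ ((ι → ℤ[G]) ⧸ K) := finite_quotient_sup_pi _ I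
  obtain ⟨e, he, approx⟩ := exists_rat_functional_of_finite_quotient K
  have := finite_quotient_sup_span_natCast I he
  obtain ⟨N, hN, pow_sub_one_mem⟩ :=
    exists_pow_sub_one_mem_of_isUnit (I ⊔ Ideal.span {(e : ℤ[G])})
  refine ⟨N, hN, fun g hg hgI => ?_⟩
  have familyFunctional_eq_zero : ∀ z ∈ K, familyFunctional g z = 0 := by
    intro z hz
    obtain ⟨y, hy, w, hw, rfl⟩ := Submodule.mem_sup.1 hz
    rw [map_add, hg.familyFunctional_eq_zero hy, zero_add, familyFunctional_apply]
    exact sum_eq_zero fun a _ => hgI a _ (hw a trivial)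
  obtain ⟨ψ, hψK, hψ⟩ := approx _ familyFunctional_eq_zero
  let error := familyFunctional g - ratToCircle.comp ψ
  have error_eq_zero : ∀ z ∈ K, error z = 0 := fun z hz => by
    simp [error, familyFunctional_eq_zero z hz, hψK z hz]
  have error_single_eq_zero (a : ι) :
      ∀ z ∈ I ⊔ Ideal.span {(e : ℤ[G])}, error (Pi.single a z) = 0 := by
    intro z hz
    obtain ⟨y, hy, w, hw, rfl⟩ := Submodule.mem_sup.1 hz
    obtain ⟨r, rfl⟩ := Ideal.mem_span_singleton'.1 hw
    have smul_error : e • error (Pi.single a r) = 0 := hψ _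
    rw [Pi.single_add, map_add, ← nsmul_eq_mul', Pi.single_smul, map_nsmul, smul_error, add_zero]
    exact error_eq_zero _ (Submodule.mem_sup_right (single_mem_pi (I := fun _ => I) hy))
  have error_lift := hasRatLift_of_eq_zero_on_single_ideal
    (fun z hz => error_eq_zero z (Submodule.mem_sup_left hz)) error_single_eq_zero
    fun u => pow_sub_one_mem _ (isUnit_single_one u)
  have ψ_lift := (isPeriodicRelation_of_eq_zero_on_relations fun z hz =>
    hψK z (Submodule.mem_sup_left hz)).hasRatLift
  convert ψ_lift.add error_lift using 1
  · rw [one_mul]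
  · ext a x
    simp [error, familyFunctional_single]

theorem exists_hasRatLift_of_pow_shiftIdeal [AddGroup.FG G] {H : AddSubgroup G}
    (hP : ∀ a, P a ⊆ H) {g : ι → G → RatCircle} (hg : IsPeriodicRelation P g) {n : ℕ}
    (hgn : ∀ a, ∀ z ∈ shiftIdeal (H : Set G) ^ n, linearExtension (k := ℤ) (g a) z = 0) :
    ∃ N, N ≠ 0 ∧ HasRatLift P N g := by
  have : Module.Finite ℤ G := Module.Finite.iff_addGroup_fg.2 inferInstance
  have : Module.Finite ℤ (AddSubgroup.toIntSubmodule H) := inferInstance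
  have : AddGroup.FG H := Module.Finite.iff_addGroup_fg.1 this
  have := finite_quotient_shiftIdeal_univ_pow (G := H) n
  obtain ⟨N, hN, lift⟩ := exists_hasRatLift_of_finite_quotient
    (fun a => ((↑) : H → G) ⁻¹' P a) (shiftIdeal Set.univ ^ n)
  refine ⟨N, hN, .of_cosets hP fun t => lift _ ⟨fun a u hu y => ?_, fun y => hg.sum_eq_zero _⟩
    fun a z hz => linearExtension_comp_add_eq_zero (f := H.subtype) ?_ t hz⟩
  · rw [AddSubgroup.coe_add, ← add_assoc]
    exact hg.periodic a _ hu _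
  · simpa using hgn a

/- Let `p` be the radical of the annihilator of the quotient by `Q`. The coordinates `a` with
`shiftIdeal (P a) ≰ p` drop out, and the periods `P a` of the others generate a subgroup `H` such
that a power of `shiftIdeal H` annihilates the whole family. -/
theorem exists_hasRatLift_of_isPrimary [AddGroup.FG G] [DecidableEq ι]
    {Q : Submodule ℤ[G] (ι → ℤ[G])} (hPQ : relations P ≤ Q) (hQ : Q.IsPrimary)
    {F : (ι → ℤ[G]) →+ RatCircle} (hF : ∀ z ∈ Q, F z = 0) :
    ∃ N, N ≠ 0 ∧ HasRatLift P N fun a x => F (Pi.single a (.single x 1)) := by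
  classical
  have := isNoetherianRing_addMonoidAlgebra (G := G)
  let p := (Q.colon Set.univ).radical
  obtain ⟨n, pow_le⟩ := Ideal.exists_radical_pow_le_of_fg (Q.colon Set.univ)
    (IsNoetherian.noetherian _)
  let S (a : ι) : Prop := shiftIdeal (P a) ≤ p
  let H : AddSubgroup G := AddSubgroup.closure (⋃ a : {a // S a}, P a)
  have shiftIdeal_H_le : shiftIdeal (H : Set G) ≤ p := by
    refine (shiftIdeal_closure_le _).trans (Ideal.span_le.2 ?_)
    rintro _ ⟨u, hu, rfl⟩
    obtain ⟨a, hu⟩ := Set.mem_iUnion.1 hu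
    exact a.2 (Ideal.subset_span (Set.mem_image_of_mem _ hu))
  have coord_eq_zero (a : ι) (ha : ¬ S a) (z : ℤ[G]) : F (Pi.single a z) = 0 :=
    hF _ (single_mem_of_isPrimary hPQ hQ ha z)
  have hrel := isPeriodicRelation_of_eq_zero_on_relations fun z hz => hF z (hPQ hz)
  have hrel_S : IsPeriodicRelation (fun a : {a // S a} => P a)
      fun a x => F (Pi.single (a : ι) (.single x 1)) := by
    refine ⟨fun a => hrel.periodic a, fun x => ?_⟩
    rw [← hrel.sum_eq_zero x, ← Fintype.sum_subtype_add_sum_subtype S, left_eq_add]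
    exact sum_eq_zero fun a _ => coord_eq_zero a a.2 _
  have pow_shiftIdeal_eq_zero (a : {a // S a}) : ∀ z ∈ shiftIdeal (H : Set G) ^ n,
      linearExtension (k := ℤ) (fun x => F (Pi.single (a : ι) (.single x 1))) z = 0 := by
    intro z hz
    have := Submodule.mem_colon.1 (pow_le (Ideal.pow_right_mono shiftIdeal_H_le n hz))
      (Pi.single (a : ι) 1) (Set.mem_univ _)
    rw [← Pi.single_smul, smul_eq_mul, mul_one] at this
    rw [linearExtension_map_pi_single]
    exact hF _ this
  obtain ⟨N, hN, lift⟩ := exists_hasRatLift_of_pow_shiftIdeal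
    (fun a => (Set.subset_iUnion (fun a : {a // S a} => P a) a).trans AddSubgroup.subset_closure)
    hrel_S pow_shiftIdeal_eq_zero
  exact ⟨N, hN, .of_subtype S lift fun a ha => funext fun x => coord_eq_zero a ha _⟩

theorem IsPeriodicRelation.exists_hasRatLift [AddGroup.FG G] {g : ι → G → RatCircle}
    (hg : IsPeriodicRelation P g) : ∃ N, N ≠ 0 ∧ HasRatLift P N g := by
  classical
  have := isNoetherianRing_addMonoidAlgebra (G := G)
  obtain ⟨s, hs, hprimary⟩ := Submodule.isLasker ℤ[G] (ι → ℤ[G]) (relations P)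
  obtain ⟨Fs, hFs, hsum⟩ := exists_eq_sum_of_eq_zero_on_inf s (F := familyFunctional g)
    fun z hz => hg.familyFunctional_eq_zero (hs ▸ hz)
  have : g = ∑ Q, fun a x => Fs Q (Pi.single a (.single x 1)) := by
    ext a x
    simp only [Finset.sum_apply, ← AddMonoidHom.finsetSum_apply, ← hsum, familyFunctional_single,
      linearExtension_single, one_smul]
  rw [this]
  exact exists_hasRatLift_sum _ fun Q _ =>
    exists_hasRatLift_of_isPrimary (hs ▸ Finset.inf_le (f := id) Q.2) (hprimary Q.2) (hFs Q)

theorem exists_int_decomposition [AddGroup.FG G] {f : ι → G → ℚ}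
    (hf : ∀ a, ∀ u ∈ P a, Function.Periodic (f a) u) {c : G → ℤ} (hc : ∀ x, ∑ a, f a x = c x) :
    ∃ N : ℕ, N ≠ 0 ∧ ∃ cs : ι → G → ℤ,
      (∀ a, ∀ u ∈ P a, Function.Periodic (cs a) (N • u)) ∧ ∀ x, ∑ a, cs a x = c x := by
  have reduction : IsPeriodicRelation P fun a x => ratToCircle (f a x) := by
    refine ⟨fun a u hu x => congrArg ratToCircle (hf a u hu x), fun x => ?_⟩
    rw [← map_sum, hc]
    exact ratToCircle_eq_zero_iff.2 ⟨c x, rfl⟩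
  obtain ⟨N, hN, φ, hφ, φ_lift⟩ := reduction.exists_hasRatLift
  have sub_isInt (a : ι) (x : G) : ∃ m : ℤ, (m : ℚ) = f a x - φ a x :=
    ratToCircle_eq_zero_iff.1 (by rw [map_sub, φ_lift, sub_self])
  choose cs hcs using sub_isInt
  refine ⟨N, hN, cs, fun a u hu x => ?_, fun x => ?_⟩ <;> rw [← Int.cast_inj (α := ℚ)]
  · rw [hcs, hcs, (hf a u hu).nsmul N x, hφ.periodic a _ (Set.mem_image_of_mem _ hu) x]
  · rw [Int.cast_sum]
    simp only [hcs, sum_sub_distrib, hφ.sum_eq_zero, hc, sub_zero]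

end Lifting

theorem exists_hasDilatedSums_intCast {ι G : Type*} [Finite ι] [AddCommGroup G]
    {D : ι → Finset G} {c : G → ℤ} {B : ℕ} (hB : ∀ u, |c u| ≤ B) {s : ι → ℤ}
    (hs : ∀ i x, ∑ u ∈ D i, c (x + u) = s i) :
    ∃ q, q ≠ 0 ∧ HasDilatedSums D q (fun i => (s i : ℝ)) fun x => (c x : ℝ) := by
  cases nonempty_fintype ι
  let M := ∑ i, #(D i) * (2 * B + 1)
  have hM (i : ι) : #(D i) * (2 * B + 1) ≤ M :=
    single_le_sum (f := fun i => #(D i) * (2 * B + 1)) (fun _ _ => Nat.zero_le _) (mem_univ i)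
  refine ⟨M.factorial, M.factorial_ne_zero, ⟨B, fun x => mod_cast hB x⟩, fun i n x => ?_⟩
  exact_mod_cast sum_add_one_add_mul_factorial_nsmul hB (hs i) (hM i) n x

section Periods

variable {d k : ℕ}

theorem linearIndependent_intVecQ_nsmul {v : Fin k → Fin d → ℤ} {N : ℕ} (hN : N ≠ 0)
    (hv : LinearIndependent ℚ fun i => intVecQ (v i)) :
    LinearIndependent ℚ fun i => intVecQ (N • v i) := by
  convert hv.units_smul fun _ => Units.mk0 (N : ℚ) (Nat.cast_ne_zero.2 hN) using 1
  ext i j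
  simp [intVecQ, Units.smul_def]

theorem exists_linearIndependent_intVecQ (hkd : k ≤ d) :
    ∃ v : Fin k → Fin d → ℤ, LinearIndependent ℚ fun i => intVecQ (v i) := by
  refine ⟨fun i => Pi.single (Fin.castLE hkd i) 1, ?_⟩
  convert (Pi.basisFun ℚ (Fin d)).linearIndependent.comp _ (Fin.castLE_injective hkd) using 1
  ext i j
  simp [intVecQ, Pi.single_apply]

theorem exists_int_sum_of_mem_span_real {c : (Fin d → ℤ) → ℤ}
    (hc : (fun x => (c x : ℝ)) ∈ Submodule.span ℝ {g | ∃ v : Fin k → Fin d → ℤ,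
      (LinearIndependent ℚ fun i => intVecQ (v i)) ∧ ∀ i, Function.Periodic g (v i)}) :
    ∃ (m : ℕ) (cs : Fin m → (Fin d → ℤ) → ℤ), (∀ a, KPeriodic k (cs a)) ∧ c = ∑ a, cs a := by
  obtain ⟨m, r, g, hsum⟩ := Submodule.mem_span_set'.1 hc
  choose v v_indep g_periodic using fun a => (g a).2
  obtain ⟨π, hπ⟩ := LinearMap.exists_leftInverse_of_injective (Algebra.linearMap ℚ ℝ)
    (LinearMap.ker_eq_bot.2 (algebraMap ℚ ℝ).injective)
  have π_intCast (n : ℤ) : π (n : ℝ) = n := by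
    simpa using LinearMap.congr_fun hπ (n : ℚ)
  obtain ⟨N, hN, cs, cs_periodic, cs_sum⟩ := exists_int_decomposition
    (P := fun a => Set.range (v a)) (f := fun a x => π ((r a • (g a).1) x)) (c := c)
    (fun a => Set.forall_mem_range.2 fun i x =>
      congrArg (fun y => π (r a • y)) (g_periodic a i x))
    (fun x => by rw [← map_sum, ← Finset.sum_apply, hsum, π_intCast])
  refine ⟨m, cs, fun a => ⟨fun i => N • v a i, linearIndependent_intVecQ_nsmul hN (v_indep a),
    fun i => cs_periodic a _ (Set.mem_range_self i)⟩, ?_⟩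
  ext x
  rw [Finset.sum_apply, cs_sum]

end Periods

theorem common_cotiler_of_independent_tiles_decomposes_general {d k : ℕ} (hkd : k ≤ d)
    (D : Fin k → Finset (Fin d → ℤ)) (hD0 : ∀ i, (0 : Fin d → ℤ) ∈ D i)
    (hind : ∀ v : Fin k → (Fin d → ℤ),
      (∀ i, v i ∈ D i ∧ v i ≠ 0) → LinearIndependent ℚ fun i => intVecQ (v i))
    (c : (Fin d → ℤ) → ℤ) {B : ℕ} (hB : ∀ u, |c u| ≤ B) (s : Fin k → ℤ)
    (hs : ∀ i, ∀ x : Fin d → ℤ, ∑ u ∈ D i, c (x + u) = s i) :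
    ∃ (m : ℕ) (cs : Fin m → ((Fin d → ℤ) → ℤ)),
      (∀ i, KPeriodic k (cs i)) ∧ c = ∑ i, cs i := by
  obtain ⟨q, hq, hc⟩ := exists_hasDilatedSums_intCast hB hs
  refine exists_int_sum_of_mem_span_real
    (Submodule.span_mono (Set.insert_subset_iff.2 ⟨?_, ?_⟩) (hc.mem_span_periodic hD0))
  · obtain ⟨v, hv⟩ := exists_linearIndependent_intVecQ hkd
    exact ⟨v, hv, fun _ _ => rfl⟩
  · rintro g ⟨v, hv, hg⟩
    exact ⟨fun i => q • v i, linearIndependent_intVecQ_nsmul hq (hind v hv), hg⟩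

/-- A common co-tiler of `k` independent tiles `D₁, …, D_k ⊆ ℤ^d` (each
containing `0`) is a finite sum of `k`-periodic integer-valued functions. -/
theorem common_cotiler_of_independent_tiles_decomposes
    {d k : ℕ} (hk1 : 1 ≤ k) (hkd : k ≤ d)
    (D : Fin k → Finset (Fin d → ℤ)) (hD0 : ∀ i, (0 : Fin d → ℤ) ∈ D i)
    (hind : ∀ v : Fin k → (Fin d → ℤ),
      (∀ i, v i ∈ D i ∧ v i ≠ 0) → LinearIndependent ℚ fun i => intVecQ (v i))
    (c : (Fin d → ℤ) → ℤ) (hc01 : ∀ u, c u = 0 ∨ c u = 1)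
    (hcotiler : ∀ i, ∀ x : Fin d → ℤ, ∑ u ∈ D i, c (x + u) = 1) :
    ∃ (m : ℕ) (cs : Fin m → ((Fin d → ℤ) → ℤ)),
      (∀ i, KPeriodic k (cs i)) ∧ c = ∑ i, cs i :=
  common_cotiler_of_independent_tiles_decomposes_general hkd D hD0 hind c (B := 1)
    (fun u => by rcases hc01 u with h | h <;> simp [h]) (fun _ => 1) hcotiler

end PaperFormal
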